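/- arXiv:2503.04045 — 2 statements merged into one kernel-verified Lean document; each statement's English description precedes it below -/
import Mathlib

section
/- For every N ≥ 3, the number of divisors d(N) satisfies d(N) ≤ N^(1.07 / log log N). -/
lemma tele (a : ℕ) : Real.log ((a:ℝ)+1) = ∑ k ∈ Finset.range a, Real.log (((k:ℝ)+2)/((k:ℝ)+1)) := by
  induction a with
  | zero => simp
  | succ n ih =>
    rw [Finset.sum_range_succ, ← ih, Real.log_div (by positivity) (by positivity)]
    push_cast
    rw [show (n:ℝ)+1+1 = n+2 by ring]; ring

lemma mainA (ε : ℝ) (K : ℕ) (t : ℕ → ℕ)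
    (h1 : ∀ k < K, ∀ p : ℕ, p.Prime → t k ≤ p → Real.log (((k:ℝ)+2)/((k:ℝ)+1)) ≤ ε * Real.log p)
    (h2 : ∀ k < K, ∀ p : ℕ, p.Prime → p < t k → ε * Real.log p ≤ Real.log (((k:ℝ)+2)/((k:ℝ)+1)))
    (h3 : ∀ k ≥ K, ∀ p : ℕ, p.Prime → Real.log (((k:ℝ)+2)/((k:ℝ)+1)) ≤ ε * Real.log p)
    (N : ℕ) (hN : N ≠ 0) :
    Real.log (N.divisors.card : ℝ) ≤ ε * Real.log N +
      ∑ k ∈ Finset.range K, ∑ p ∈ (t k).primesBelow, (Real.log (((k:ℝ)+2)/((k:ℝ)+1)) - ε * Real.log p) := by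
  set g : ℕ → ℕ → ℝ := fun k p => max 0 (Real.log (((k:ℝ)+2)/((k:ℝ)+1)) - ε * Real.log p) with hg
  have e1 : Real.log (N.divisors.card : ℝ) = ∑ p ∈ N.primeFactors, Real.log ((N.factorization p : ℝ) + 1) := by
    rw [Nat.card_divisors hN]
    push_cast
    rw [Real.log_prod]
    intro p hp; positivity
  have e2 : Real.log (N : ℝ) = ∑ p ∈ N.primeFactors, (N.factorization p : ℝ) * Real.log p := by
    conv_lhs => rw [← Nat.prod_factorization_pow_eq_self hN]
    rw [Finsupp.prod, Nat.support_factorization]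
    push_cast
    rw [Real.log_prod]
    · simp
    · intro p hp
      have := (Nat.prime_of_mem_primeFactors hp).pos
      positivity
  have e3 : ∀ p ∈ N.primeFactors, Real.log ((N.factorization p : ℝ) + 1) ≤
      ε * ((N.factorization p : ℝ) * Real.log p) + ∑ k ∈ Finset.range K, g k p := by
    intro p hp
    have hpp := Nat.prime_of_mem_primeFactors hp
    set a := N.factorization p
    have : ∑ k ∈ Finset.range a, (Real.log (((k:ℝ)+2)/((k:ℝ)+1)) - ε * Real.log p) ≤ ∑ k ∈ Finset.range K, g k p := by
      calc _ ≤ ∑ k ∈ Finset.range a, g k p := Finset.sum_le_sum fun k _ => le_max_right _ _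
        _ ≤ ∑ k ∈ Finset.range (max a K), g k p :=
          Finset.sum_le_sum_of_subset_of_nonneg (Finset.range_subset_range.2 (le_max_left _ _)) fun _ _ _ => le_max_left _ _
        _ = _ := by
          symm
          apply Finset.sum_subset (Finset.range_subset_range.2 (le_max_right _ _))
          intro k _ hk
          have := h3 k (by simpa using hk) p hpp
          exact max_eq_left (by linarith)
    rw [Finset.sum_sub_distrib, ← tele] at this
    simp at this
    nlinarith
  calc _ ≤ ∑ p ∈ N.primeFactors, (ε * ((N.factorization p : ℝ) * Real.log p) + ∑ k ∈ Finset.range K, g k p) := by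
        rw [e1]; exact Finset.sum_le_sum e3
    _ = ε * Real.log N + ∑ k ∈ Finset.range K, ∑ p ∈ N.primeFactors, g k p := by
        rw [Finset.sum_add_distrib, e2, Finset.mul_sum, Finset.sum_comm]
    _ ≤ _ := by
        gcongr with k hk
        have hk := Finset.mem_range.1 hk
        calc _ = ∑ p ∈ N.primeFactors.filter (· < t k), g k p := by
              symm
              apply Finset.sum_subset (Finset.filter_subset _ _)
              intro p hp hp'
              have := h1 k hk p (Nat.prime_of_mem_primeFactors hp) (by
                by_contra h; exact hp' (Finset.mem_filter.2 ⟨hp, by omega⟩))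
              exact max_eq_left (by linarith)
          _ ≤ ∑ p ∈ (t k).primesBelow, g k p := by
              apply Finset.sum_le_sum_of_subset_of_nonneg
              · intro p hp
                rw [Finset.mem_filter] at hp
                exact Nat.mem_primesBelow.2 ⟨hp.2, Nat.prime_of_mem_primeFactors hp.1⟩
              · intros; exact le_max_left _ _
          _ = _ := by
              apply Finset.sum_congr rfl
              intro p hp
              have := h2 k hk p (Nat.prime_of_mem_primesBelow hp) (Nat.lt_of_mem_primesBelow hp)
              exact max_eq_right (by linarith)

def isP (n : ℕ) : Bool := decide (2 ≤ n) && (List.range 23).all fun d => decide (d < 2) || decide (d = n) || decide (n % d ≠ 0)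
def cnt : ℕ → ℕ
  | 0 => 0
  | n+1 => if isP n = true then cnt n + 1 else cnt n
def prd : ℕ → ℕ
  | 0 => 1
  | n+1 => if isP n = true then prd n * n else prd n

lemma isP_prime {p : ℕ} (hp : p.Prime) : isP p = true := by
  simp only [isP, Bool.and_eq_true, decide_eq_true_eq, List.all_eq_true, Bool.or_eq_true]
  refine ⟨hp.two_le, fun d _ => ?_⟩
  by_cases h : d < 2
  · simp [h]
  by_cases h' : d = p
  · simp [h']
  right
  intro h0
  rcases (Nat.dvd_prime hp).1 (Nat.dvd_of_mod_eq_zero h0) with h1 | h1 <;> omega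

lemma cnt_prd (n : ℕ) : (cnt n = ((Finset.range n).filter (isP · = true)).card) ∧
   Real.log (prd n) = ∑ p ∈ (Finset.range n).filter (isP · = true), Real.log p ∧ 0 < prd n := by
  induction n with
  | zero => simp [cnt, prd]
  | succ n ih =>
    rw [Finset.range_add_one, Finset.filter_insert, cnt, prd]
    split_ifs with h
    · rw [Finset.card_insert_of_notMem (by simp), Finset.sum_insert (by simp)]
      have hn : 2 ≤ n := by simp [isP] at h; exact h.1
      refine ⟨by rw [ih.1], ?_, by have := ih.2.2; positivity⟩
      push_cast
      rw [Real.log_mul (by have := ih.2.2; positivity) (by positivity), ih.2.1, add_comm]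
    · exact ih

def chk (a b j : ℕ) (ts : List ℕ) : Prop :=
  0 < a ∧ 0 < b ∧ (∀ k < ts.length, (ts.getD k 0 - 1)^a*(k+1)^b ≤ (k+2)^b ∧ (k+2)^b ≤ (ts.getD k 0)^a*(k+1)^b ∧ 0 < ts.getD k 0) ∧
  (ts.length+2)^b ≤ 2^a*(ts.length+1)^b ∧
  (∏ k ∈ Finset.range ts.length, (k+2)^(cnt (ts.getD k 0) * (b*50))) * 100000^(j*b) ≤
  (∏ k ∈ Finset.range ts.length, ((k+1)^(cnt (ts.getD k 0) * (b*50)) * (prd (ts.getD k 0))^(a*50))) * 271828^(j*b)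

instance (a b j : ℕ) (ts : List ℕ) : Decidable (chk a b j ts) := by unfold chk; infer_instance

lemma pieceA (a b j : ℕ) (ts : List ℕ) (h : chk a b j ts) (N : ℕ) (hN : N ≠ 0) :
    Real.log (N.divisors.card : ℝ) ≤ (a/b:ℝ) * Real.log N + j/50 := by
  obtain ⟨ha, hb, hk, hl, hm⟩ := h
  have hbR : (0:ℝ) < b := by exact_mod_cast hb
  have haR : (0:ℝ) < a := by exact_mod_cast ha
  have conv1 : ∀ k p : ℕ, 0 < p → (k+2)^b ≤ p^a*(k+1)^b → Real.log (((k:ℝ)+2)/((k:ℝ)+1)) ≤ (a/b:ℝ) * Real.log p := by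
    intro k p hp h
    have hpR : (0:ℝ) < p := by exact_mod_cast hp
    have h' : ((k:ℝ)+2)^b ≤ (p:ℝ)^a*((k:ℝ)+1)^b := by exact_mod_cast h
    have := Real.log_le_log (by positivity) h'
    rw [Real.log_mul (by positivity) (by positivity), Real.log_pow, Real.log_pow, Real.log_pow] at this
    rw [Real.log_div (by positivity) (by positivity), div_mul_eq_mul_div, le_div_iff₀ hbR]
    linarith
  have conv2 : ∀ k p : ℕ, 0 < p → p^a*(k+1)^b ≤ (k+2)^b → (a/b:ℝ) * Real.log p ≤ Real.log (((k:ℝ)+2)/((k:ℝ)+1)) := by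
    intro k p hp h
    have hpR : (0:ℝ) < p := by exact_mod_cast hp
    have h' : (p:ℝ)^a*((k:ℝ)+1)^b ≤ ((k:ℝ)+2)^b := by exact_mod_cast h
    have := Real.log_le_log (by positivity) h'
    rw [Real.log_mul (by positivity) (by positivity), Real.log_pow, Real.log_pow, Real.log_pow] at this
    rw [Real.log_div (by positivity) (by positivity), div_mul_eq_mul_div, div_le_iff₀ hbR]
    linarith
  have h2 : ∀ k < ts.length, ∀ p : ℕ, 0 < p → p < ts.getD k 0 → (a/b:ℝ) * Real.log p ≤ Real.log (((k:ℝ)+2)/((k:ℝ)+1)) := by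
    intro k hk' p hp hpt
    apply conv2 k p hp
    refine le_trans ?_ (hk k hk').1
    gcongr
    omega
  refine (mainA (a/b) ts.length (fun k => ts.getD k 0) ?_ ?_ ?_ N hN).trans ?_
  · intro k hk' p hp htp
    apply conv1 k p hp.pos
    refine (hk k hk').2.1.trans ?_
    gcongr
  · intro k hk' p hp hpt
    exact h2 k hk' p hp.pos hpt
  · intro k hk' p hp
    have s1 := conv1 ts.length 2 (by norm_num) hl
    have s2 : Real.log (((k:ℝ)+2)/((k:ℝ)+1)) ≤ Real.log (((ts.length:ℝ)+2)/((ts.length:ℝ)+1)) := by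
      apply Real.log_le_log (by positivity)
      rw [div_le_div_iff₀ (by positivity) (by positivity)]
      have : (ts.length : ℝ) ≤ k := by exact_mod_cast hk'
      nlinarith
    have s3 : Real.log (2:ℕ) ≤ Real.log p := Real.log_le_log (by norm_num) (by exact_mod_cast hp.two_le)
    have : (a/b:ℝ) * Real.log (2:ℕ) ≤ a/b * Real.log p := by gcongr
    linarith
  · gcongr
    have b1 : ∀ k ∈ Finset.range ts.length, ∑ p ∈ (ts.getD k 0).primesBelow, (Real.log (((k:ℝ)+2)/((k:ℝ)+1)) - (a/b:ℝ) * Real.log p) ≤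
        cnt (ts.getD k 0) * Real.log (((k:ℝ)+2)/((k:ℝ)+1)) - (a/b:ℝ) * Real.log (prd (ts.getD k 0)) := by
      intro k hk'
      have hk' := Finset.mem_range.1 hk'
      rw [(cnt_prd _).1, (cnt_prd _).2.1, Finset.mul_sum, ← nsmul_eq_mul, ← Finset.sum_const, ← Finset.sum_sub_distrib]
      apply Finset.sum_le_sum_of_subset_of_nonneg
      · intro p hp
        rw [Nat.mem_primesBelow] at hp
        exact Finset.mem_filter.2 ⟨Finset.mem_range.2 hp.1, isP_prime hp.2⟩
      · intro p hp _
        simp only [Finset.mem_filter, Finset.mem_range] at hp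
        have : 0 < p := by
          rcases Nat.eq_zero_or_pos p with h | h
          · subst h; simp [isP] at hp
          · exact h
        have := h2 k hk' p this hp.1
        linarith
    refine (Finset.sum_le_sum b1).trans ?_
    have hm' : (∏ k ∈ Finset.range ts.length, ((k:ℝ)+2)^(cnt (ts.getD k 0) * (b*50))) * 100000^(j*b) ≤
  (∏ k ∈ Finset.range ts.length, (((k:ℝ)+1)^(cnt (ts.getD k 0) * (b*50)) * ((prd (ts.getD k 0) : ℕ) : ℝ)^(a*50))) * 271828^(j*b) := by
      exact_mod_cast hm
    have pp : ∀ k : ℕ, (0:ℝ) < ((prd (ts.getD k 0) : ℕ) : ℝ) := fun k => by exact_mod_cast (cnt_prd _).2.2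
    have n1 : ∀ k ∈ Finset.range ts.length, ((k:ℝ)+2)^(cnt (ts.getD k 0) * (b*50)) ≠ 0 := fun k _ => by positivity
    have n2 : ∀ k ∈ Finset.range ts.length, (((k:ℝ)+1)^(cnt (ts.getD k 0) * (b*50)) * ((prd (ts.getD k 0) : ℕ) : ℝ)^(a*50)) ≠ 0 :=
      fun k _ => by have := pp k; positivity
    have hlog := Real.log_le_log (mul_pos (Finset.prod_pos fun k _ => by positivity) (by positivity)) hm'
    rw [Real.log_mul (Finset.prod_ne_zero_iff.2 n1) (by positivity),
      Real.log_mul (Finset.prod_ne_zero_iff.2 n2) (by positivity), Real.log_prod n1, Real.log_prod n2,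
      Real.log_pow, Real.log_pow] at hlog
    have he : Real.log 271828 ≤ 1 + Real.log 100000 := by
      have : Real.log (271828/100000) ≤ 1 := by
        rw [Real.log_le_iff_le_exp (by norm_num)]
        have := Real.exp_one_gt_d9
        linarith
      rw [Real.log_div (by norm_num) (by norm_num)] at this
      linarith
    have key : ∑ k ∈ Finset.range ts.length, (cnt (ts.getD k 0) * Real.log (((k:ℝ)+2)/((k:ℝ)+1)) - (a/b:ℝ) * Real.log (prd (ts.getD k 0))) * (b*50)
       = ∑ k ∈ Finset.range ts.length, Real.log (((k:ℝ)+2)^(cnt (ts.getD k 0) * (b*50))) - ∑ k ∈ Finset.range ts.length, Real.log (((k:ℝ)+1)^(cnt (ts.getD k 0) * (b*50)) * ((prd (ts.getD k 0) : ℕ) : ℝ)^(a*50)) := by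
      rw [← Finset.sum_sub_distrib]
      apply Finset.sum_congr rfl
      intro k _
      have := pp k
      rw [Real.log_mul (by positivity) (by positivity), Real.log_pow, Real.log_pow, Real.log_pow, Real.log_div (by positivity) (by positivity)]
      push_cast
      field_simp
      ring
    rw [← Finset.sum_mul] at key
    have hjb : (0:ℝ) ≤ j*b := by positivity
    have : (((j*b:ℕ):ℝ)) * Real.log 271828 ≤ ((j*b:ℕ):ℝ) * (1 + Real.log 100000) := by gcongr
    push_cast at this hlog
    rw [le_div_iff₀ (by norm_num)]
    refine le_of_mul_le_mul_right ?_ hbR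
    linarith

lemma pieceB (ε φ E l lo hi x y : ℝ) (hε : 0 ≤ ε) (hφ : 0 ≤ φ) (hE : Real.exp (-l) ≤ E)
    (hx : 1 < x) (h1 : lo ≤ x) (h2 : x ≤ hi) (hy : y ≤ ε * x + φ)
    (hlo : (ε*lo+φ)*(l-1+E*lo) ≤ 1.07*lo) (hhi : (ε*hi+φ)*(l-1+E*hi) ≤ 1.07*hi) :
    y * Real.log x ≤ 1.07 * x := by
  have hl : Real.log x ≤ l - 1 + E * x := by
    have := Real.log_le_sub_one_of_pos (show 0 < x * Real.exp (-l) by positivity)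
    rw [Real.log_mul (by positivity) (by positivity), Real.log_exp] at this
    nlinarith
  have hlx : 0 < Real.log x := Real.log_pos hx
  have hE0 : 0 ≤ E := (Real.exp_pos _).le.trans hE
  have c1 : y * Real.log x ≤ (ε*x+φ)*(l-1+E*x) := by
    calc y * Real.log x ≤ (ε*x+φ) * Real.log x := by gcongr
      _ ≤ _ := by gcongr
  refine c1.trans ?_
  rcases eq_or_lt_of_le (h1.trans h2) with h | h
  · have : x = lo := by linarith
    subst this; exact hlo
  · have q : 0 ≤ ε * E * ((x-lo)*(hi-x)) := by
      have := sub_nonneg.2 h1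
      have := sub_nonneg.2 h2
      positivity
    have : (hi-lo) * ((ε*x+φ)*(l-1+E*x) - 1.07*x) = (hi-x)*((ε*lo+φ)*(l-1+E*lo) - 1.07*lo) + (x-lo)*((ε*hi+φ)*(l-1+E*hi) - 1.07*hi) - (hi-lo)*(ε * E * ((x-lo)*(hi-x))) := by ring
    have t1 : (hi-x)*((ε*lo+φ)*(l-1+E*lo) - 1.07*lo) ≤ 0 := mul_nonpos_of_nonneg_of_nonpos (by linarith) (by linarith)
    have t2 : (x-lo)*((ε*hi+φ)*(l-1+E*hi) - 1.07*hi) ≤ 0 := mul_nonpos_of_nonneg_of_nonpos (by linarith) (by linarith)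
    have t3 : 0 ≤ (hi-lo)*(ε * E * ((x-lo)*(hi-x))) := mul_nonneg (by linarith) q
    have : (hi-lo) * ((ε*x+φ)*(l-1+E*x) - 1.07*x) ≤ 0 := by linarith
    nlinarith

lemma expB (r s : ℕ) (E : ℝ) (hs : 0 < s) (hE : 0 ≤ E) (h : 1 ≤ E^s * 2.71828^r) : Real.exp (-((r:ℝ)/s)) ≤ E := by
  have hsR : (0:ℝ) < s := by exact_mod_cast hs
  rw [← pow_le_pow_iff_left₀ (by positivity) hE hs.ne', ← Real.exp_nat_mul]
  rw [show (s:ℝ) * -(r/s) = -r by field_simp, Real.exp_neg, inv_le_iff_one_le_mul₀ (by positivity)]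
  refine h.trans ?_
  gcongr
  rw [← Real.exp_one_pow]
  have := Real.exp_one_gt_d9
  gcongr
  linarith

set_option exponentiation.threshold 100000000

lemma piece (a b j r s : ℕ) (E lo hi : ℝ) (ts : List ℕ) (h : chk a b j ts) (hs : 0 < s) (hE : 0 ≤ E)
    (hE' : 1 ≤ E^s * 2.71828^r) (hlo : ((a/b:ℝ)*lo+j/50)*((r/s:ℝ)-1+E*lo) ≤ 1.07*lo)
    (hhi : ((a/b:ℝ)*hi+j/50)*((r/s:ℝ)-1+E*hi) ≤ 1.07*hi) (N : ℕ) (hN : N ≠ 0)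
    (h1 : 1 < Real.log N) (h2 : lo ≤ Real.log N) (h3 : Real.log N ≤ hi) :
    Real.log (N.divisors.card : ℝ) * Real.log (Real.log N) ≤ 1.07 * Real.log N :=
  pieceB (a/b) (j/50) E (r/s) lo hi _ _ (by positivity) (by positivity) (expB r s E hs hE hE') h1 h2 h3
    (pieceA a b j ts h N hN) hlo hhi

lemma finitePart (N : ℕ) (hN : N ≠ 0) (h1 : 1.09 ≤ Real.log N) (h2 : Real.log N ≤ 226622/100) :
    Real.log (N.divisors.card : ℝ) * Real.log (Real.log N) ≤ 1.07 * Real.log N := by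
  have h0 : 1 < Real.log N := by linarith
  rcases le_total (Real.log N) (515/100) with g | g
  · exact piece 10 27 50 1 1 (9197/25000) (109/100) (515/100) [7,3,3] (by decide +kernel) (by norm_num) (by norm_num) (by norm_num) (by norm_num) (by norm_num) N hN h0 (by linarith) (by linarith)
  rcases le_total (Real.log N) (1158/100) with g | g
  · exact piece 12 41 80 11 5 (11081/100000) (515/100) (1158/100) [11,4,3,3] (by decide +kernel) (by norm_num) (by norm_num) (by norm_num) (by norm_num) (by norm_num) N hN h0 (by linarith) (by linarith)
  rcases le_total (Real.log N) (1707/100) with g | g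
  · exact piece 15 58 100 27 10 (6721/100000) (1158/100) (1707/100) [15,5,4,3,3] (by decide +kernel) (by norm_num) (by norm_num) (by norm_num) (by norm_num) (by norm_num) N hN h0 (by linarith) (by linarith)
  rcases le_total (Real.log N) (2210/100) with g | g
  · exact piece 17 70 113 3 1 (4979/100000) (1707/100) (2210/100) [18,6,4,3,3] (by decide +kernel) (by norm_num) (by norm_num) (by norm_num) (by norm_num) (by norm_num) N hN h0 (by linarith) (by linarith)
  rcases le_total (Real.log N) (3045/100) with g | g
  · exact piece 19 86 137 16 5 (4077/100000) (2210/100) (3045/100) [24,7,4,3,3,3] (by decide +kernel) (by norm_num) (by norm_num) (by norm_num) (by norm_num) (by norm_num) N hN h0 (by linarith) (by linarith)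
  rcases le_total (Real.log N) (6119/100) with g | g
  · exact piece 7 36 177 73 20 (13/500) (3045/100) (6119/100) [36,9,5,4,3,3] (by decide +kernel) (by norm_num) (by norm_num) (by norm_num) (by norm_num) (by norm_num) N hN h0 (by linarith) (by linarith)
  rcases le_total (Real.log N) (25594/100) with g | g
  · exact piece 11 70 284 19 4 (433/50000) (6119/100) (25594/100) [83,14,7,5,4,3,3,3] (by decide +kernel) (by norm_num) (by norm_num) (by norm_num) (by norm_num) (by norm_num) N hN h0 (by linarith) (by linarith)
  exact piece 1 9 802 129 20 (159/100000) (25594/100) (226622/100) [512,39,14,8,6,5,4,3,3,3,3,3] (by decide +kernel) (by norm_num) (by norm_num) (by norm_num) (by norm_num) (by norm_num) N hN h0 (by linarith) (by linarith)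


lemma pc (n : ℕ) : ((n+1).primesBelow.card : ℝ) ≤ n/3+3 := by
  rw [Nat.primesBelow_card_eq_primeCounting']
  rcases lt_or_ge n 6 with h | h
  · have : Nat.primeCounting' (n+1) ≤ Nat.primeCounting' 7 := Nat.monotone_primeCounting' (by omega)
    have h7 : Nat.primeCounting' 7 = 3 := by decide
    have : (Nat.primeCounting' (n+1) : ℝ) ≤ 3 := by exact_mod_cast (h7 ▸ this)
    have : (0:ℝ) ≤ n := by positivity
    linarith
  · obtain ⟨m, rfl⟩ := Nat.exists_eq_add_of_le h
    have := Nat.primeCounting'_add_le (a := 6) (k := 7) (by norm_num) (by norm_num) m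
    have h7 : Nat.primeCounting' 7 = 3 := by decide
    have h6 : Nat.totient 6 = 2 := by decide
    rw [h7, h6] at this
    have e : 6 + m + 1 = 7 + m := by ring
    rw [e]
    have h3 : 3 * Nat.primeCounting' (7+m) ≤ 15 + m := by omega
    have : 3 * (Nat.primeCounting' (7+m) : ℝ) ≤ 15 + m := by exact_mod_cast h3
    push_cast
    linarith

lemma Sb (n : ℕ) : ∑ p ∈ (n+2).primesBelow, (Real.log ((n+1 : ℕ):ℝ) - Real.log p) ≤ ((n+1:ℕ):ℝ)/3 + 3 * Real.log ((n+1:ℕ):ℝ) := by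
  induction n with
  | zero => simp [Nat.primesBelow_two]
  | succ n ih =>
    have hc := pc (n+1)
    have hstep : ∑ p ∈ (n+3).primesBelow, (Real.log ((n+2 : ℕ):ℝ) - Real.log p) = ∑ p ∈ (n+2).primesBelow, (Real.log ((n+2 : ℕ):ℝ) - Real.log p) := by
      rw [Nat.primesBelow_succ]
      split_ifs with h
      · rw [Finset.sum_insert (by simp [Nat.mem_primesBelow])]; simp
      · rfl
    have e : ∑ p ∈ (n+2).primesBelow, (Real.log ((n+2 : ℕ):ℝ) - Real.log p) = ∑ p ∈ (n+2).primesBelow, (Real.log ((n+1 : ℕ):ℝ) - Real.log p) + ((n+2).primesBelow.card:ℝ) * (Real.log ((n+2 : ℕ):ℝ) - Real.log ((n+1 : ℕ):ℝ)) := by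
      simp only [Finset.sum_sub_distrib, Finset.sum_const, nsmul_eq_mul]; ring
    have hl : Real.log ((n+2 : ℕ):ℝ) - Real.log ((n+1 : ℕ):ℝ) ≤ 1/((n+1:ℕ):ℝ) := by
      rw [← Real.log_div (by positivity) (by positivity)]
      refine (Real.log_le_sub_one_of_pos (by positivity)).trans (le_of_eq ?_)
      field_simp; push_cast; ring
    have hl0 : 0 ≤ Real.log ((n+2 : ℕ):ℝ) - Real.log ((n+1 : ℕ):ℝ) := by
      rw [sub_nonneg]; apply Real.log_le_log (by positivity); push_cast; linarith
    have : ((n+2).primesBelow.card:ℝ) * (Real.log ((n+2 : ℕ):ℝ) - Real.log ((n+1 : ℕ):ℝ)) ≤ (((n+1:ℕ):ℝ)/3+3) * (Real.log ((n+2 : ℕ):ℝ) - Real.log ((n+1 : ℕ):ℝ)) := by gcongr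
    have h3 : ((n+1:ℕ):ℝ)/3 * (Real.log ((n+2 : ℕ):ℝ) - Real.log ((n+1 : ℕ):ℝ)) ≤ 1/3 := by
      calc _ ≤ ((n+1:ℕ):ℝ)/3 * (1/((n+1:ℕ):ℝ)) := by gcongr
        _ = 1/3 := by field_simp
    show ∑ p ∈ (n+3).primesBelow, (Real.log ((n+2 : ℕ):ℝ) - Real.log p) ≤ ((n+2:ℕ):ℝ)/3 + 3 * Real.log ((n+2:ℕ):ℝ)
    rw [hstep, e]
    have : ((n+2:ℕ):ℝ) = ((n+1:ℕ):ℝ)+1 := by push_cast; ring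
    nlinarith

lemma SbR (y : ℝ) (hy : 1 ≤ y) : ∑ p ∈ (⌊y⌋₊+1).primesBelow, (Real.log y - Real.log p) ≤ y/3 + 3 * Real.log y := by
  obtain ⟨n, hn⟩ : ∃ n, ⌊y⌋₊ = n+1 := ⟨⌊y⌋₊-1, by have := Nat.floor_pos.2 hy; omega⟩
  have hny : ((n+1:ℕ):ℝ) ≤ y := by rw [← hn]; exact Nat.floor_le (by linarith)
  rw [hn]
  have hc := pc (n+1)
  have e : ∑ p ∈ (n+2).primesBelow, (Real.log y - Real.log p) = ∑ p ∈ (n+2).primesBelow, (Real.log ((n+1 : ℕ):ℝ) - Real.log p) + ((n+2).primesBelow.card:ℝ) * (Real.log y - Real.log ((n+1 : ℕ):ℝ)) := by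
    simp only [Finset.sum_sub_distrib, Finset.sum_const, nsmul_eq_mul]; ring
  have hl : Real.log y - Real.log ((n+1 : ℕ):ℝ) ≤ (y-(n+1:ℕ))/((n+1:ℕ):ℝ) := by
    rw [← Real.log_div (by positivity) (by positivity)]
    refine (Real.log_le_sub_one_of_pos (by positivity)).trans (le_of_eq ?_)
    field_simp
  have hl0 : 0 ≤ Real.log y - Real.log ((n+1 : ℕ):ℝ) := by
    rw [sub_nonneg]; exact Real.log_le_log (by positivity) hny
  have : ((n+2).primesBelow.card:ℝ) * (Real.log y - Real.log ((n+1 : ℕ):ℝ)) ≤ (((n+1:ℕ):ℝ)/3+3) * (Real.log y - Real.log ((n+1 : ℕ):ℝ)) := by gcongr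
  have h3 : ((n+1:ℕ):ℝ)/3 * (Real.log y - Real.log ((n+1 : ℕ):ℝ)) ≤ (y-(n+1:ℕ))/3 := by
    calc _ ≤ ((n+1:ℕ):ℝ)/3 * ((y-(n+1:ℕ))/((n+1:ℕ):ℝ)) := by gcongr
      _ = _ := by field_simp
  have := Sb n
  show ∑ p ∈ (n+2).primesBelow, (Real.log y - Real.log p) ≤ _
  rw [e]
  nlinarith

lemma tail1 (u : ℝ) (hu : 7.7 ≤ u) : Real.exp (0.6*u)/3 + 4.8*u + 2.09*u*(Real.exp (0.42*u)/3+1.26*u) ≤ 0.21 * Real.exp u := by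
  obtain ⟨v, rfl⟩ : ∃ v, u = 7.7 * (1 + v) := ⟨u/7.7-1, by ring⟩
  have hv : 0 ≤ v := by linarith
  have e1 := Real.exp_one_gt_d9
  -- decay
  have d1 : ∀ c : ℝ, 0 ≤ c → 1 ≤ Real.exp (c * v) := fun c hc => Real.one_le_exp (by positivity)
  have d2 : ∀ c : ℝ, 1 ≤ c → 1 + v ≤ Real.exp (c*v) := fun c hc => by
    have := Real.add_one_le_exp (c*v); nlinarith
  set X := Real.exp (7.7*(1+v)) with hX
  have hXp : 0 < X := Real.exp_pos _
  have lowexp : ∀ r : ℕ, (2.7182:ℝ)^r ≤ Real.exp r := fun r => by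
    rw [← Real.exp_one_pow]; gcongr; linarith
  have a1 : Real.exp (0.6*(7.7*(1+v))) ≤ 0.05 * X := by
    have : Real.exp (0.6*(7.7*(1+v))) * Real.exp (3 : ℕ) ≤ X := by
      rw [← Real.exp_add, hX]; apply Real.exp_le_exp.2; push_cast; nlinarith
    have h := lowexp 3
    have : Real.exp (0.6*(7.7*(1+v))) * (2.7182:ℝ)^3 ≤ X := le_trans (by gcongr) this
    norm_num at this ⊢
    nlinarith [Real.exp_pos (0.6*(7.7*(1+v)))]
  have a2 : (1+v) * Real.exp (0.42*(7.7*(1+v))) ≤ 0.0125 * X := by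
    have : (1+v) * Real.exp (0.42*(7.7*(1+v))) * Real.exp (4.4) ≤ X := by
      calc _ ≤ Real.exp (1*v) * Real.exp (0.42*(7.7*(1+v))) * Real.exp (4.4) := by gcongr; exact d2 1 le_rfl
        _ ≤ X := by rw [← Real.exp_add, ← Real.exp_add, hX]; apply Real.exp_le_exp.2; nlinarith
    have h : (80:ℝ) ≤ Real.exp 4.4 := by
      rw [← pow_le_pow_iff_left₀ (by norm_num) (by positivity) (show 5 ≠ 0 by norm_num), ← Real.exp_nat_mul]
      have := lowexp 22
      norm_num at this ⊢; linarith
    have : (1+v) * Real.exp (0.42*(7.7*(1+v))) * 80 ≤ X := le_trans (by gcongr) this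
    linarith
  have a3 : (1+v)^2 ≤ 0.00047 * X := by
    have : (1+v)^2 * Real.exp 7.7 ≤ X := by
      calc _ ≤ (Real.exp (1*v))^2 * Real.exp 7.7 := by gcongr; exact d2 1 le_rfl
        _ ≤ X := by rw [← Real.exp_nat_mul, ← Real.exp_add, hX]; apply Real.exp_le_exp.2; push_cast; nlinarith
    have h : (2200:ℝ) ≤ Real.exp 7.7 := by
      rw [← pow_le_pow_iff_left₀ (by norm_num) (by positivity) (show 10 ≠ 0 by norm_num), ← Real.exp_nat_mul]
      have := lowexp 77
      norm_num at this ⊢; linarith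
    have : (1+v)^2 * 2200 ≤ X := le_trans (by gcongr) this
    linarith
  have a4 : 1 + v ≤ (1+v)^2 := by nlinarith
  nlinarith

lemma tailPart (N : ℕ) (hN : N ≠ 0) (u : ℝ) (hu : 7.7 ≤ u) (hNu : Real.log N = Real.exp u) :
    Real.log (N.divisors.card : ℝ) * u ≤ 1.07 * Real.exp u := by
  have l1 := Real.log_two_gt_d9
  have l2 := Real.log_two_lt_d9
  set c := Real.log 2 with hc
  have hu0 : 0 < u := by linarith
  have hc0 : 0 < c := by linarith
  set ε := c / u with hε
  have hε0 : 0 < ε := by positivity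
  set L : ℕ → ℝ := fun k => Real.log (((k:ℝ)+2)/((k:ℝ)+1)) with hL
  have hL0 : ∀ k, 0 ≤ L k := fun k => Real.log_nonneg (by rw [le_div_iff₀ (by positivity)]; linarith)
  set Y : ℕ → ℝ := fun k => Real.exp (L k / ε) with hY
  have hY1 : ∀ k, 1 ≤ Y k := fun k => Real.one_le_exp (div_nonneg (hL0 k) hε0.le)
  have hYl : ∀ k, Real.log (Y k) = L k / ε := fun k => Real.log_exp _
  have hLY : ∀ k, L k = ε * Real.log (Y k) := fun k => by rw [hYl]; field_simp
  set K := ⌈u/c^2⌉₊ with hK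
  have hK1 : u/c^2 ≤ K := Nat.le_ceil _
  have hK2 : (K:ℝ) < u/c^2+1 := Nat.ceil_lt_add_one (by positivity)
  have hcc : (0.4804:ℝ) ≤ c^2 := by nlinarith
  have hcc' : c^2 ≤ (0.49:ℝ) := by nlinarith
  have hK3 : (K:ℝ) ≤ 2.09*u+2 := by
    have : u/c^2 ≤ u/0.4804 := by gcongr
    have : u/0.4804 ≤ 2.09*u := by rw [div_le_iff₀ (by norm_num)]; linarith
    linarith
  have hK4 : 2 ≤ K := by
    have : u/0.49 ≤ u/c^2 := by gcongr
    have : (2:ℝ) ≤ u/0.49 := by rw [le_div_iff₀ (by norm_num)]; linarith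
    have : (2:ℝ) ≤ K := by linarith
    exact_mod_cast this
  have hm := mainA ε K (fun k => ⌊Y k⌋₊+1) ?_ ?_ ?_ N hN
  · have b1 : ∀ k ∈ Finset.range K, ∑ p ∈ (⌊Y k⌋₊+1).primesBelow, (L k - ε * Real.log p) ≤ ε * (Y k / 3 + 3 * Real.log (Y k)) := by
      intro k _
      calc _ = ε * ∑ p ∈ (⌊Y k⌋₊+1).primesBelow, (Real.log (Y k) - Real.log p) := by
            rw [Finset.mul_sum]; apply Finset.sum_congr rfl; intro p _; rw [hLY k]; ring
        _ ≤ _ := by gcongr; exact SbR _ (hY1 k)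
    have hm2 := hm.trans (add_le_add_right (Finset.sum_le_sum b1) _)
    rw [← Finset.mul_sum, ← mul_add, hNu] at hm2
    have y0 : Real.log (Y 0) = u := by
      rw [hYl]; simp only [hL, hε]; norm_num; rw [← hc]; field_simp
    have y0' : Y 0 = Real.exp u := by rw [← y0, Real.exp_log (by linarith [hY1 0])]
    have y1 : Real.log (Y 1) ≤ 0.6*u := by
      have : L 1 ≤ 0.6*c := by
        have h := Real.log_le_log (by norm_num) (show ((3:ℝ)/2)^5 ≤ 2^3 by norm_num)
        rw [Real.log_pow, Real.log_pow] at h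
        simp only [hL]; norm_num at h ⊢; linarith
      rw [hYl, div_le_iff₀ hε0, hε]; field_simp; linarith
    have y2 : ∀ k, Real.log (Y (k+2)) ≤ 0.42*u := by
      intro k
      have : L (k+2) ≤ 0.42*c := by
        have h := Real.log_le_log (by norm_num) (show ((4:ℝ)/3)^50 ≤ 2^21 by norm_num)
        rw [Real.log_pow, Real.log_pow] at h
        have : L (k+2) ≤ Real.log (4/3) := by
          simp only [hL]
          apply Real.log_le_log (by positivity)
          rw [div_le_div_iff₀ (by positivity) (by positivity)]
          push_cast; linarith
        norm_num at h ⊢; linarith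
      rw [hYl, div_le_iff₀ hε0, hε]; field_simp; linarith
    have y1' : Y 1 ≤ Real.exp (0.6*u) := by rw [← Real.exp_log (show 0 < Y 1 by linarith [hY1 1])]; exact Real.exp_le_exp.2 y1
    have y2' : ∀ k, Y (k+2) ≤ Real.exp (0.42*u) := fun k => by
      rw [← Real.exp_log (show 0 < Y (k+2) by linarith [hY1 (k+2)])]; exact Real.exp_le_exp.2 (y2 k)
    have hs : ∑ k ∈ Finset.range K, (Y k / 3 + 3 * Real.log (Y k)) ≤ Real.exp u / 3 + 3*u + (Real.exp (0.6*u)/3+1.8*u) + 2.09*u*(Real.exp (0.42*u)/3+1.26*u) := by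
      obtain ⟨m, hm⟩ : ∃ m, K = m+2 := ⟨K-2, by omega⟩
      rw [hm, Finset.sum_range_succ', Finset.sum_range_succ']
      have : ∑ k ∈ Finset.range m, (Y (k+1+1) / 3 + 3 * Real.log (Y (k+1+1))) ≤ ∑ k ∈ Finset.range m, (Real.exp (0.42*u)/3+1.26*u) := by
        apply Finset.sum_le_sum; intro k _
        have := y2 k; have := y2' k
        show Y (k+2) / 3 + 3 * Real.log (Y (k+2)) ≤ _
        linarith
      rw [Finset.sum_const, nsmul_eq_mul, Finset.card_range] at this
      have hmu : (m:ℝ) ≤ 2.09*u := by rw [hm] at hK3; push_cast at hK3; linarith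
      have : (m:ℝ) * (Real.exp (0.42*u)/3+1.26*u) ≤ 2.09*u*(Real.exp (0.42*u)/3+1.26*u) := by gcongr
      simp only [zero_add]
      rw [y0, y0']
      linarith
    have ht := tail1 u hu
    have hX := Real.exp_pos u
    calc Real.log (N.divisors.card : ℝ) * u ≤ (ε * (Real.exp u + ∑ k ∈ Finset.range K, (Y k / 3 + 3 * Real.log (Y k)))) * u := by gcongr
      _ = c * (Real.exp u + ∑ k ∈ Finset.range K, (Y k / 3 + 3 * Real.log (Y k))) := by rw [hε]; field_simp
      _ ≤ c * (1.5434 * Real.exp u) := by gcongr; linarith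
      _ ≤ _ := by nlinarith
  · intro k _ p hp hkp
    show L k ≤ _
    rw [hLY k]
    have : Y k ≤ p := (Nat.lt_floor_add_one (Y k)).le.trans (by exact_mod_cast hkp)
    gcongr
  · intro k _ p hp hkp
    show _ ≤ L k
    rw [hLY k]
    have : (p:ℝ) ≤ Y k := (Nat.le_floor_iff (by linarith [hY1 k])).1 (by simpa [Nat.lt_succ_iff] using hkp)
    have := hp.pos
    gcongr
  · intro k hk p hp
    have s3 : c ≤ Real.log p := Real.log_le_log (by norm_num) (by exact_mod_cast hp.two_le)
    have s4 : Real.log (((k:ℝ)+2)/((k:ℝ)+1)) ≤ 1/((k:ℝ)+1) := by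
      refine (Real.log_le_sub_one_of_pos (by positivity)).trans (le_of_eq ?_)
      field_simp; ring
    have s5 : 1/((k:ℝ)+1) ≤ ε * c := by
      have : (K:ℝ) ≤ k := by exact_mod_cast hk
      rw [div_le_iff₀ (by positivity), hε]
      have : u/c^2 ≤ k+1 := by linarith
      calc (1:ℝ) = c/u*c*(u/c^2) := by field_simp
        _ ≤ _ := by gcongr
    have : ε * c ≤ ε * Real.log p := by gcongr
    linarith

theorem stmt_4 (N : ℕ) (hN : 3 ≤ N) :
    (N.divisors.card : ℝ) ≤ (N : ℝ) ^ (1.07 / Real.log (Real.log N)) := by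
  have hN0 : N ≠ 0 := by omega
  have hNp : (0:ℝ) < N := by exact_mod_cast Nat.pos_of_ne_zero hN0
  have h3 : Real.log 3 ≤ Real.log N := Real.log_le_log (by norm_num) (by exact_mod_cast hN)
  have h109 : (1.09:ℝ) ≤ Real.log 3 := by
    rw [Real.le_log_iff_exp_le (by norm_num)]
    rw [← pow_le_pow_iff_left₀ (by positivity) (by norm_num) (show 100 ≠ 0 by norm_num), ← Real.exp_nat_mul]
    have : Real.exp ((109:ℕ):ℝ) ≤ 2.7183^109 := by
      rw [← Real.exp_one_pow]; have := Real.exp_one_lt_d9; gcongr; linarith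
    norm_num at this ⊢; linarith
  have hx1 : 1 < Real.log N := by linarith
  have hll : 0 < Real.log (Real.log N) := Real.log_pos hx1
  have key : Real.log (N.divisors.card : ℝ) * Real.log (Real.log N) ≤ 1.07 * Real.log N := by
    rcases le_total (Real.log N) (226622/100) with h | h
    · exact finitePart N hN0 (by linarith) h
    · have e : Real.exp (Real.log (Real.log N)) = Real.log N := Real.exp_log (by linarith)
      have := tailPart N hN0 (Real.log (Real.log N)) ?_ e.symm
      · rwa [e] at this
      · rw [Real.le_log_iff_exp_le (by linarith)]
        refine le_trans ?_ h
        rw [← pow_le_pow_iff_left₀ (by positivity) (by norm_num) (show 10 ≠ 0 by norm_num), ← Real.exp_nat_mul]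
        have : Real.exp ((77:ℕ):ℝ) ≤ 2.7183^77 := by
          rw [← Real.exp_one_pow]; have := Real.exp_one_lt_d9; gcongr; linarith
        norm_num at this ⊢; linarith
  have hd : (0:ℝ) < N.divisors.card := by
    exact_mod_cast Finset.card_pos.2 ⟨1, Nat.one_mem_divisors.2 hN0⟩
  rw [Real.rpow_def_of_pos hNp, ← Real.log_le_iff_le_exp hd, mul_div_assoc', le_div_iff₀ hll]
  linarith
end

section
/- Fix an integer k ≥ 1. Then the sum over primes p ≤ x with gcd(p, k) = 1 of gcd(p−1, k)/p equals d(k)·log log x + B_k + O_k(1/log x) for some constant B_k depending only on k, where d(k) is the number of divisors of k. -/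
open Finset in
lemma abel_ineq (c : ℕ → ℂ) (f : ℕ → ℝ) (m : ℕ) (M : ℝ)
    (hc : ∀ n, m ≤ n → ‖∑ i ∈ Ioc m n, c i‖ ≤ M)
    (hf0 : ∀ n, m < n → 0 ≤ f n) (hf : ∀ n, m < n → f (n+1) ≤ f n) (N : ℕ) (hN : m ≤ N) :
    ‖∑ i ∈ Ioc m N, (f i : ℂ) * c i‖ ≤ M * f (m+1) := by
  have hM : 0 ≤ M := le_trans (norm_nonneg _) (hc m le_rfl)
  rcases hN.eq_or_lt with rfl | hN
  · simpa using mul_nonneg hM (hf0 _ (Nat.lt_succ_self _))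
  have key : ‖∑ i ∈ Ioc m N, (f i : ℂ) * c i - f N * ∑ i ∈ Ioc m N, c i‖ ≤ M * (f (m+1) - f N) := by
    induction N, hN using Nat.le_induction with
    | base => simp
    | succ n hn ih =>
      have hn' : m < n := hn
      rw [sum_Ioc_succ_top hn'.le, sum_Ioc_succ_top hn'.le]
      have e : ∑ i ∈ Ioc m n, (f i : ℂ) * c i + f (n+1) * c (n+1)
          - f (n+1) * (∑ i ∈ Ioc m n, c i + c (n+1))
          = (∑ i ∈ Ioc m n, (f i : ℂ) * c i - f n * ∑ i ∈ Ioc m n, c i)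
            + ((f n - f (n+1) : ℝ) : ℂ) * ∑ i ∈ Ioc m n, c i := by push_cast; ring
      rw [e]
      refine (norm_add_le _ _).trans ?_
      have h2 : ‖((f n - f (n+1) : ℝ) : ℂ) * ∑ i ∈ Ioc m n, c i‖ ≤ (f n - f (n+1)) * M := by
        rw [norm_mul, Complex.norm_real, Real.norm_of_nonneg (sub_nonneg.2 (hf n hn'))]
        exact mul_le_mul_of_nonneg_left (hc n hn'.le) (sub_nonneg.2 (hf n hn'))
      linarith [ih hn'.le]
  have h3 : ‖(f N : ℂ) * ∑ i ∈ Ioc m N, c i‖ ≤ f N * M := by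
    rw [norm_mul, Complex.norm_real, Real.norm_of_nonneg (hf0 N hN)]
    exact mul_le_mul_of_nonneg_left (hc N hN.le) (hf0 N hN)
  have := norm_add_le (∑ i ∈ Ioc m N, (f i : ℂ) * c i - f N * ∑ i ∈ Ioc m N, c i) ((f N : ℂ) * ∑ i ∈ Ioc m N, c i)
  rw [sub_add_cancel] at this
  linarith

open Finset in
lemma char_sum_bdd {d : ℕ} [NeZero d] (χ : DirichletCharacter ℂ d) (hχ : χ ≠ 1) (m n : ℕ) (h : m ≤ n) :
    ‖∑ i ∈ Ioc m n, χ (i : ZMod d)‖ ≤ 2 * d := by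
  have h0 : ∑ i ∈ range d, χ (i : ZMod d) = 0 := by
    rw [← MulChar.sum_eq_zero_of_ne_one hχ]
    rw [Finset.sum_range]
    refine Fintype.sum_bijective (fun i : Fin d => ((i : ℕ) : ZMod d)) ?_ _ _ (fun _ => rfl)
    rw [Fintype.bijective_iff_injective_and_card]
    refine ⟨fun a b hab => ?_, by simp [ZMod.card]⟩
    have := (ZMod.natCast_eq_natCast_iff' _ _ _).1 hab
    rw [Nat.mod_eq_of_lt a.2, Nat.mod_eq_of_lt b.2] at this
    exact Fin.ext this
  have hper : ∀ N, ∑ i ∈ range (N + d), χ (i : ZMod d) = ∑ i ∈ range N, χ (i : ZMod d) := by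
    intro N
    induction N with
    | zero => simpa using h0
    | succ N ih =>
      rw [show N + 1 + d = (N + d) + 1 by ring, sum_range_succ, ih, sum_range_succ]
      simp
  have hper2 : ∀ k N, ∑ i ∈ range (N + k * d), χ (i : ZMod d) = ∑ i ∈ range N, χ (i : ZMod d) := by
    intro k N
    induction k with
    | zero => simp
    | succ k ih => rw [show N + (k+1) * d = (N + k * d) + d by ring, hper, ih]
  have hb : ∀ N, ‖∑ i ∈ range N, χ (i : ZMod d)‖ ≤ d := by
    intro N
    have := hper2 (N / d) (N % d)
    rw [mul_comm, Nat.mod_add_div] at this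
    rw [this]
    refine (norm_sum_le_of_le _ (fun i _ => χ.norm_le_one _)).trans ?_
    simp
    exact_mod_cast (Nat.mod_lt _ (NeZero.pos d)).le
  have e : ∑ i ∈ Ioc m n, χ (i : ZMod d) = ∑ i ∈ range (n+1), χ (i : ZMod d) - ∑ i ∈ range (m+1), χ (i : ZMod d) := by
    rw [← Finset.sum_Ico_eq_sub _ (by omega)]
    congr 1
    ext; simp
  rw [e]
  refine (norm_sub_le _ _).trans ?_
  linarith [hb (n+1), hb (m+1)]

open Finset Filter Topology in
lemma L_tail {d : ℕ} [NeZero d] (χ : DirichletCharacter ℂ d) (hχ : χ ≠ 1) (N : ℕ) :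
    ‖DirichletCharacter.LFunction χ 1 - ∑ i ∈ Ioc 0 N, χ (i : ZMod d) / i‖ ≤ 2 * d / (N + 1) := by
  have main : ∀ s : ℝ, 1 < s → ‖DirichletCharacter.LFunction χ s - ∑ i ∈ Ioc 0 N, χ (i : ZMod d) / (i:ℂ) ^ (s:ℂ)‖
      ≤ 2 * d / (N + 1) := by
    intro s hs
    have hs' : 1 < (s : ℂ).re := by simpa using hs
    rw [DirichletCharacter.LFunction_eq_LSeries χ hs']
    have hsum := (DirichletCharacter.LSeriesSummable_of_one_lt_re χ hs').LSeriesHasSum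
    have ht := hsum.tendsto_sum_nat
    have ht2 : Tendsto (fun n => ∑ i ∈ range (n+1), LSeries.term (fun n => χ n) s i) atTop (𝓝 (LSeries (fun n => χ n) s)) :=
      ht.comp (tendsto_add_atTop_nat 1)
    have e : ∀ n, ∑ i ∈ range (n+1), LSeries.term (fun n => χ n) s i = ∑ i ∈ Ioc 0 n, χ (i : ZMod d) / (i:ℂ) ^ (s:ℂ) := by
      intro n
      rw [sum_range_succ']
      simp only [LSeries.term_zero, add_zero]
      rw [show Ioc 0 n = Ico 1 (n+1) by ext; simp; omega, Finset.sum_Ico_eq_sum_range]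
      refine sum_congr (by simp) (fun i _ => ?_)
      rw [LSeries.term_of_ne_zero (by omega), add_comm]
    simp_rw [e] at ht2
    refine le_of_tendsto (ht2.sub_const _).norm ?_
    filter_upwards [eventually_ge_atTop N] with n hn
    have : ∑ i ∈ Ioc 0 n, χ (i : ZMod d) / (i:ℂ) ^ (s:ℂ) - ∑ i ∈ Ioc 0 N, χ (i : ZMod d) / (i:ℂ) ^ (s:ℂ)
        = ∑ i ∈ Ioc N n, (((i:ℝ) ^ (-s) : ℝ) : ℂ) * χ (i : ZMod d) := by
      rw [← sum_Ioc_consecutive _ (Nat.zero_le N) hn, add_sub_cancel_left]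
      refine sum_congr rfl (fun i hi => ?_)
      rw [Complex.ofReal_cpow (by positivity)]
      push_cast
      rw [Complex.cpow_neg]
      field_simp
    rw [this]
    refine (abel_ineq _ (fun i => (i:ℝ) ^ (-s)) N (2*d) (fun n hn => char_sum_bdd χ hχ N n hn)
      (fun n _ => by positivity) (fun n hn => ?_) n hn).trans ?_
    · exact Real.rpow_le_rpow_of_nonpos (by exact_mod_cast (by omega : 0 < n)) (by push_cast; linarith) (by linarith)
    · rw [div_eq_mul_inv]
      refine mul_le_mul_of_nonneg_left ?_ (by positivity)
      rw [Real.rpow_neg (by positivity)]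
      refine inv_anti₀ (by positivity) ?_
      push_cast
      exact Real.self_le_rpow_of_one_le (by linarith [(Nat.cast_nonneg N : (0:ℝ) ≤ N)]) hs.le
  have hcont : Continuous (fun s : ℝ => ‖DirichletCharacter.LFunction χ s - ∑ i ∈ Ioc 0 N, χ (i : ZMod d) / (i:ℂ) ^ (s:ℂ)‖) := by
    refine Continuous.norm (Continuous.sub ((DirichletCharacter.differentiable_LFunction hχ).continuous.comp Complex.continuous_ofReal) ?_)
    refine continuous_finsetSum _ (fun i hi => ?_)
    have hi0 : (i:ℂ) ≠ 0 := by
      simp at hi; exact_mod_cast (by omega : i ≠ 0)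
    refine Continuous.div continuous_const ?_ (fun s => by simp [Complex.cpow_eq_zero_iff, hi0])
    exact Continuous.const_cpow Complex.continuous_ofReal (Or.inl hi0)
  have h1 := (hcont.tendsto 1).mono_left (nhdsWithin_le_nhds (s := Set.Ioi (1:ℝ)))
  have := le_of_tendsto h1 (by filter_upwards [self_mem_nhdsWithin] with s hs using main s hs)
  simpa using this

open Finset in
lemma log_div_sum_bdd {d : ℕ} [NeZero d] (χ : DirichletCharacter ℂ d) (hχ : χ ≠ 1) :
    ∃ K : ℝ, ∀ N : ℕ, ‖∑ i ∈ Ioc 0 N, χ (i : ZMod d) * Real.log i / i‖ ≤ K := by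
  refine ⟨∑ i ∈ Ioc (0:ℕ) 3, ‖χ (i : ZMod d) * Real.log (i:ℝ) / i‖ + 2 * d * (Real.log ((3 + 1 : ℕ) : ℝ) / ((3+1 : ℕ):ℝ)), fun N => ?_⟩
  have hpos : 0 ≤ 2 * d * (Real.log ((3 + 1 : ℕ) : ℝ) / ((3+1 : ℕ):ℝ)) :=
    mul_nonneg (by positivity) (div_nonneg (Real.log_natCast_nonneg _) (by positivity))
  rcases le_total N 3 with h | h
  · have h1 := norm_sum_le (Ioc 0 N) (fun i => χ (i : ZMod d) * Real.log i / i)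
    have h2 : ∑ i ∈ Ioc 0 N, ‖χ (i : ZMod d) * Real.log i / i‖ ≤ ∑ i ∈ Ioc (0:ℕ) 3, ‖χ (i : ZMod d) * Real.log i / i‖ :=
      sum_le_sum_of_subset_of_nonneg (Ioc_subset_Ioc_right h) (fun _ _ _ => norm_nonneg _)
    linarith
  · rw [← sum_Ioc_consecutive _ (Nat.zero_le 3) h]
    refine (norm_add_le _ _).trans (add_le_add (norm_sum_le _ _) ?_)
    have := abel_ineq (fun i => χ (i : ZMod d)) (fun i => Real.log i / i) 3 (2*d) (fun n hn => char_sum_bdd χ hχ 3 n hn)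
      (fun n _ => div_nonneg (Real.log_natCast_nonneg _) (by positivity)) (fun n hn => ?_) N h
    · refine le_trans (le_of_eq (congrArg norm ?_)) this
      refine sum_congr rfl (fun i _ => ?_)
      push_cast; ring
    · have hn3 : (3:ℝ) ≤ n := by exact_mod_cast hn.le
      have he : Real.exp 1 ≤ 3 := by linarith [Real.exp_one_lt_d9]
      exact Real.log_div_self_antitoneOn (by simp; linarith) (by simp; linarith) (by simp)

open Finset ArithmeticFunction in
lemma psi_bound (N : ℕ) : ∑ n ∈ Ioc 0 N, vonMangoldt n ≤ (Real.log 4 + 4) * N := by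
  have := Chebyshev.psi_le_const_mul_self (Nat.cast_nonneg N : (0:ℝ) ≤ N)
  simpa [Chebyshev.psi] using this

open Finset ArithmeticFunction in
lemma char_mangoldt_bdd {d : ℕ} [NeZero d] (χ : DirichletCharacter ℂ d) (hχ : χ ≠ 1) :
    ∃ K : ℝ, ∀ N : ℕ, ‖∑ i ∈ Ioc 0 N, χ (i : ZMod d) * (vonMangoldt i : ℝ) / i‖ ≤ K := by
  obtain ⟨K, hK⟩ := log_div_sum_bdd χ hχ
  set L := DirichletCharacter.LFunction χ 1 with hL
  have hL0 : L ≠ 0 := DirichletCharacter.LFunction_ne_zero_of_one_le_re χ (Or.inl hχ) (by simp)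
  have hLp : 0 < ‖L‖ := norm_pos_iff.2 hL0
  refine ⟨(K + 2 * d * (Real.log 4 + 4)) / ‖L‖, fun N => ?_⟩
  rw [le_div_iff₀ hLp, mul_comm, ← norm_mul]
  rcases Nat.eq_zero_or_pos N with rfl | hN
  · simp
    have := (norm_nonneg _).trans (hK 0)
    have := Real.log_nonneg (show (1:ℝ) ≤ 4 by norm_num)
    positivity
  have hNr : (0:ℝ) < N := by exact_mod_cast hN
  let f : ArithmeticFunction ℂ := ⟨fun i => χ (i : ZMod d) * (vonMangoldt i : ℝ) / i, by simp⟩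
  let g : ArithmeticFunction ℂ := ⟨fun i => χ (i : ZMod d) / i, by simp⟩
  have hfg : ∀ n ∈ Ioc 0 N, (f * g) n = χ (n : ZMod d) * Real.log n / n := by
    intro n hn
    rw [← vonMangoldt_sum, ArithmeticFunction.mul_apply]
    push_cast
    rw [mul_sum, sum_div, Nat.sum_divisorsAntidiagonal (fun a b => f a * g b)]
    refine sum_congr rfl (fun i hi => ?_)
    have hdvd := Nat.dvd_of_mem_divisors hi
    obtain ⟨j, rfl⟩ := hdvd
    have hi0 : i ≠ 0 := by rintro rfl; simp at hn
    have hj0 : j ≠ 0 := by rintro rfl; simp at hn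
    simp [f, g, Nat.mul_div_cancel_left j (Nat.pos_of_ne_zero hi0)]
    field_simp
  have hconv := sum_Ioc_mul_eq_sum_sum f g N
  rw [sum_congr rfl hfg] at hconv
  have e : L * ∑ i ∈ Ioc 0 N, χ (i : ZMod d) * (vonMangoldt i : ℝ) / i
      = ∑ i ∈ Ioc 0 N, χ (i : ZMod d) * Real.log i / i
        + ∑ i ∈ Ioc 0 N, f i * (L - ∑ m ∈ Ioc 0 (N / i), χ (m : ZMod d) / m) := by
    rw [hconv, ← sum_add_distrib, mul_sum]
    refine sum_congr rfl (fun i _ => ?_)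
    simp [f, g]
    ring
  rw [e]
  refine (norm_add_le _ _).trans (add_le_add (hK N) ?_)
  have hb : ∀ i ∈ Ioc 0 N, ‖f i * (L - ∑ m ∈ Ioc 0 (N / i), χ (m : ZMod d) / m)‖ ≤ vonMangoldt i * (2 * d / N) := by
    intro i hi
    have hi0 : (0:ℝ) < i := by simp at hi; exact_mod_cast hi.1
    have h1 : ‖f i‖ ≤ vonMangoldt i / i := by
      simp only [f, coe_mk, norm_div, norm_mul, Complex.norm_natCast, Complex.norm_real,
        Real.norm_of_nonneg vonMangoldt_nonneg]
      gcongr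
      exact mul_le_of_le_one_left vonMangoldt_nonneg (χ.norm_le_one _)
    have h2 := L_tail χ hχ (N / i)
    have h3 : (N:ℝ) / i ≤ ((N / i : ℕ) : ℝ) + 1 := by
      rw [← Nat.floor_div_eq_div (K := ℝ)]
      exact (Nat.lt_floor_add_one _).le
    have h4 : 2 * (d:ℝ) / (((N / i : ℕ) : ℝ) + 1) ≤ 2 * d / (N / i) := by
      gcongr
    rw [norm_mul]
    calc _ ≤ vonMangoldt i / i * (2 * d / (N / i)) :=
          mul_le_mul h1 (h2.trans h4) (norm_nonneg _) (div_nonneg vonMangoldt_nonneg hi0.le)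
      _ = _ := by field_simp
  refine (norm_sum_le_of_le _ hb).trans ?_
  rw [← sum_mul]
  calc _ ≤ (Real.log 4 + 4) * N * (2 * d / N) := by
        gcongr
        exact psi_bound N
    _ = _ := by field_simp

open Finset ArithmeticFunction in
lemma mertens_one : ∃ K : ℝ, ∀ N : ℕ, 1 ≤ N → |∑ i ∈ Ioc 0 N, vonMangoldt i / i - Real.log N| ≤ K := by
  have hl4 := Real.log_nonneg (show (1:ℝ) ≤ 4 by norm_num)
  refine ⟨Real.log 4 + 4, fun N hN => ?_⟩
  have hNr : (0:ℝ) < N := by exact_mod_cast hN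
  have h1 := sum_Ioc_mul_zeta_eq_sum (vonMangoldt) N
  rw [vonMangoldt_mul_zeta] at h1
  simp only [log_apply] at h1
  have hup : ∑ n ∈ Ioc 0 N, Real.log n ≤ N * Real.log N := by
    refine (sum_le_card_nsmul _ _ (Real.log N) (fun i hi => ?_)).trans (by simp)
    simp at hi
    exact Real.log_le_log (by exact_mod_cast hi.1) (by exact_mod_cast hi.2)
  have hlo : ∀ N : ℕ, N * Real.log N - N ≤ ∑ n ∈ Ioc 0 N, Real.log n := by
    intro N
    induction N with
    | zero => simp
    | succ n ih =>
      rw [sum_Ioc_succ_top (Nat.zero_le _)]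
      rcases Nat.eq_zero_or_pos n with rfl | hn
      · simp
      have hn' : (0:ℝ) < n := by exact_mod_cast hn
      have : Real.log ((n:ℝ)+1) - Real.log n ≤ 1 / n := by
        rw [← Real.log_div (by positivity) (by positivity)]
        have := Real.log_le_sub_one_of_pos (show 0 < ((n:ℝ)+1)/n by positivity)
        refine this.trans (le_of_eq ?_)
        field_simp
        ring
      have h3 : n * (Real.log ((n:ℝ)+1) - Real.log n) ≤ 1 := by
        calc _ ≤ n * (1 / (n:ℝ)) := by gcongr
          _ = 1 := by field_simp
      push_cast
      linarith
  have ha : ∑ n ∈ Ioc 0 N, vonMangoldt n * ((N / n : ℕ) : ℝ) ≤ N * ∑ i ∈ Ioc 0 N, vonMangoldt i / i := by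
    rw [mul_sum]
    refine sum_le_sum (fun i hi => ?_)
    calc _ ≤ vonMangoldt i * ((N:ℝ) / i) := mul_le_mul_of_nonneg_left Nat.cast_div_le vonMangoldt_nonneg
      _ = _ := by ring
  have hb : N * ∑ i ∈ Ioc 0 N, vonMangoldt i / i ≤
      ∑ n ∈ Ioc 0 N, vonMangoldt n * ((N / n : ℕ) : ℝ) + ∑ n ∈ Ioc 0 N, vonMangoldt n := by
    rw [mul_sum, ← sum_add_distrib]
    refine sum_le_sum (fun i hi => ?_)
    have h3 : (N:ℝ) / i ≤ ((N / i : ℕ) : ℝ) + 1 := by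
      rw [← Nat.floor_div_eq_div (K := ℝ)]
      exact (Nat.lt_floor_add_one _).le
    have := mul_le_mul_of_nonneg_left h3 (vonMangoldt_nonneg (n := i))
    calc _ = vonMangoldt i * ((N:ℝ) / i) := by ring
      _ ≤ _ := this
      _ = _ := by ring
  have hp := psi_bound N
  have hl := hlo N
  set S := ∑ i ∈ Ioc 0 N, vonMangoldt i / i
  rw [abs_le]
  constructor
  · have : N * (-(Real.log 4 + 4)) ≤ N * (S - Real.log N) := by nlinarith
    exact le_of_mul_le_mul_left this hNr
  · have : N * (S - Real.log N) ≤ N * (Real.log 4 + 4) := by nlinarith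
    exact le_of_mul_le_mul_left this hNr

open Finset ArithmeticFunction in
lemma prime_powers : ∃ K : ℝ, ∀ g : ℕ → ℂ, (∀ n, ‖g n‖ ≤ 1) → ∀ N : ℕ,
    ‖∑ i ∈ Ioc 0 N, (if i.Prime then g i * Real.log i / i else 0)
      - ∑ i ∈ Ioc 0 N, g i * (vonMangoldt i : ℝ) / i‖ ≤ K := by
  have hs := vonMangoldt.summable_residueClass_non_primes_div (q := 1) 0
  refine ⟨_, fun g hg N => le_trans ?_ (hs.sum_le_tsum (Ioc 0 N) (fun i _ => ?_))⟩
  · rw [← sum_sub_distrib]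
    refine norm_sum_le_of_le _ (fun i hi => ?_)
    split_ifs with hp
    · simp [vonMangoldt_apply_prime hp]
    · simp only [zero_sub, norm_neg, norm_div, norm_mul, Complex.norm_natCast, Complex.norm_real,
        Real.norm_of_nonneg vonMangoldt_nonneg]
      gcongr
      rw [vonMangoldt.residueClass, Set.indicator_of_mem (show i ∈ {n : ℕ | (n : ZMod 1) = 0} from Subsingleton.elim _ _)]
      exact mul_le_of_le_one_left vonMangoldt_nonneg (hg _)
  · positivity [vonMangoldt.residueClass_nonneg (q := 1) 0 i]

open Finset in
def HasM (g : ℕ → ℂ) (a : ℂ) : Prop := ∃ B : ℂ, ∃ C : ℝ, ∀ x : ℝ, 3 ≤ x →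
  ‖∑ p ∈ Ioc 0 ⌊x⌋₊, (if p.Prime then g p / p else 0) - (a * Real.log (Real.log x) + B)‖ ≤ C / Real.log x

lemma one_le_log {x : ℝ} (hx : 3 ≤ x) : 1 ≤ Real.log x := by
  rw [Real.le_log_iff_exp_le (by linarith)]
  linarith [Real.exp_one_lt_d9]

lemma HasM.add {g h : ℕ → ℂ} {a b : ℂ} (hg : HasM g a) (hh : HasM h b) :
    HasM (fun n => g n + h n) (a + b) := by
  obtain ⟨B, C, H⟩ := hg
  obtain ⟨B', C', H'⟩ := hh
  refine ⟨B + B', C + C', fun x hx => ?_⟩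
  have := norm_add_le_of_le (H x hx) (H' x hx)
  rw [add_div]
  refine le_trans (le_of_eq (congrArg norm ?_)) this
  rw [sub_add_sub_comm, ← Finset.sum_add_distrib]
  congr 1
  · refine Finset.sum_congr rfl (fun p _ => ?_)
    split_ifs
    · ring
    · simp
  · ring

lemma HasM.finite {g : ℕ → ℂ} (k : ℕ) (hg : ∀ p, p.Prime → k < p → g p = 0) : HasM g 0 := by
  set T : ℕ → ℂ := fun N => ∑ p ∈ Finset.Ioc 0 N, (if p.Prime then g p / p else 0)
  have hT : ∀ N, k ≤ N → T N = T k := by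
    intro N hN
    simp only [T]
    rw [← Finset.sum_Ioc_consecutive _ (Nat.zero_le k) hN]
    rw [add_eq_left]
    refine Finset.sum_eq_zero (fun p hp => ?_)
    split_ifs with h
    · rw [hg p h (Finset.mem_Ioc.1 hp).1]; simp
    · rfl
  refine ⟨T k, (∑ N ∈ Finset.range k, ‖T N - T k‖) * Real.log (k+1), fun x hx => ?_⟩
  have hl := one_le_log hx
  change ‖T ⌊x⌋₊ - _‖ ≤ _
  rw [zero_mul, zero_add]
  have hlk : 0 ≤ Real.log (k+1) := Real.log_nonneg (by linarith [(Nat.cast_nonneg k : (0:ℝ) ≤ k)])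
  rcases le_or_gt k ⌊x⌋₊ with h | h
  · rw [hT _ h]
    simp
    positivity
  · rw [le_div_iff₀ (by linarith)]
    refine mul_le_mul ?_ ?_ (by linarith) (by positivity)
    · exact Finset.single_le_sum (f := fun N => ‖T N - T k‖) (fun _ _ => norm_nonneg _) (Finset.mem_range.2 h)
    · refine Real.log_le_log (by linarith) ?_
      have := (Nat.floor_lt (by linarith)).1 h
      linarith

lemma HasM.congr {g h : ℕ → ℂ} {a : ℂ} (hg : HasM g a) (k : ℕ) (hh : ∀ p, p.Prime → k < p → h p = g p) :
    HasM h a := by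
  have := hg.add (HasM.finite (g := fun n => h n - g n) k (fun p hp hk => by rw [hh p hp hk, sub_self]))
  simpa using this

lemma HasM.sum {ι : Type*} (s : Finset ι) (g : ι → ℕ → ℂ) (a : ι → ℂ) (h : ∀ i ∈ s, HasM (g i) (a i)) :
    HasM (fun n => ∑ i ∈ s, g i n) (∑ i ∈ s, a i) := by
  classical
  induction s using Finset.induction_on with
  | empty => simpa using HasM.finite (g := fun _ => 0) 0 (fun _ _ _ => rfl)
  | insert i s hi ih =>
    simp only [Finset.sum_insert hi]
    exact (h i (by simp)).add (ih (fun j hj => h j (by simp [hj])))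

lemma loglog_step {u v : ℝ} (hv : 0 < v) (huv : v ≤ u) (h1 : u - v ≤ 1) :
    |(u - v) / u - (Real.log u - Real.log v)| ≤ 1 / v - 1 / u := by
  have hu : 0 < u := by linarith
  have a1 : Real.log u - Real.log v ≤ u / v - 1 := by
    rw [← Real.log_div hu.ne' hv.ne']
    exact Real.log_le_sub_one_of_pos (by positivity)
  have a2 : 1 - v / u ≤ Real.log u - Real.log v := by
    have := Real.log_le_sub_one_of_pos (show 0 < v / u by positivity)
    rw [Real.log_div hv.ne' hu.ne'] at this
    linarith
  have e1 : (u - v) / u = 1 - v / u := by field_simp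
  have e2 : (u / v - 1) - (1 - v / u) = (u - v) * (1 / v - 1 / u) := by field_simp
  have h0 : 0 ≤ 1 / v - 1 / u := sub_nonneg.2 (one_div_le_one_div_of_le hv huv)
  have e3 : (u - v) * (1 / v - 1 / u) ≤ 1 / v - 1 / u := mul_le_of_le_one_left h0 h1
  rw [e1, abs_le]
  constructor <;> linarith

lemma log_succ_sub {y x : ℝ} (hy : 1 ≤ y) (hx : y ≤ x) (h : x ≤ y + 1) : Real.log x - Real.log y ≤ 1 := by
  rw [← Real.log_div (by linarith) (by linarith)]
  have := Real.log_le_sub_one_of_pos (show 0 < x / y from div_pos (by linarith) (by linarith))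
  have h2 : x / y ≤ 2 := by rw [div_le_iff₀ (by linarith)]; linarith
  linarith

open Finset in
lemma loglog_tele (M N : ℕ) (hM : 3 ≤ M) (h : M ≤ N) :
    |∑ n ∈ Ioc M N, (Real.log n - Real.log ((n - 1 : ℕ) : ℝ)) / Real.log n
      - (Real.log (Real.log N) - Real.log (Real.log M))| ≤ 1 / Real.log M - 1 / Real.log N := by
  induction N, h using Nat.le_induction with
  | base => simp
  | succ n hn ih =>
    rw [sum_Ioc_succ_top hn]
    have hn3 : (3:ℝ) ≤ n := by exact_mod_cast hM.trans hn
    have := loglog_step (u := Real.log ((n+1 : ℕ):ℝ)) (v := Real.log n) (by linarith [one_le_log hn3])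
      (Real.log_le_log (by linarith) (by simp)) (log_succ_sub (by linarith) (by simp) (by simp))
    rw [Nat.add_sub_cancel]
    rw [abs_le] at *
    constructor <;> linarith [this.1, this.2, ih.1, ih.2]

open Finset Filter Topology in
lemma HasM.of_log (g : ℕ → ℂ) (a : ℂ) (K : ℝ)
    (h : ∀ N : ℕ, 1 ≤ N → ‖∑ n ∈ Ioc 0 N, (if n.Prime then g n * Real.log n / n else 0) - a * Real.log N‖ ≤ K) :
    HasM g a := by
  have hK : 0 ≤ K := (norm_nonneg _).trans (h 1 le_rfl)
  set F : ℕ → ℂ := fun N => ∑ p ∈ Ioc 0 N, (if p.Prime then g p / p else 0) - a * Real.log (Real.log N) with hF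
  set C := 2 * K + ‖a‖
  have hC : 0 ≤ C := by positivity
  have key : ∀ M N : ℕ, 3 ≤ M → M ≤ N → ‖F N - F M‖ ≤ C / Real.log M := by
    intro M N hM hMN
    have hM3 : (3:ℝ) ≤ M := by exact_mod_cast hM
    have hlM := one_le_log hM3
    set b : ℕ → ℂ := fun n => (if n.Prime then g n * Real.log n / n else 0) - a * (Real.log n - Real.log ((n-1:ℕ):ℝ)) with hb
    have htel : ∀ n, M ≤ n → ∑ i ∈ Ioc M n, ((Real.log i : ℂ) - Real.log ((i-1:ℕ):ℝ)) = Real.log n - Real.log M := by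
      intro n hn
      induction n, hn using Nat.le_induction with
      | base => simp
      | succ n hn ih => rw [sum_Ioc_succ_top hn, ih, Nat.add_sub_cancel]; ring
    have hbs : ∀ n, M ≤ n → ‖∑ i ∈ Ioc M n, b i‖ ≤ 2 * K := by
      intro n hn
      have e : ∑ i ∈ Ioc M n, b i = (∑ i ∈ Ioc 0 n, (if i.Prime then g i * Real.log i / i else 0) - a * Real.log n)
          - (∑ i ∈ Ioc 0 M, (if i.Prime then g i * Real.log i / i else 0) - a * Real.log M) := by
        rw [hb, sum_sub_distrib, ← mul_sum, htel n hn, ← sum_Ioc_consecutive _ (Nat.zero_le M) hn]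
        ring
      rw [e]
      refine (norm_sub_le _ _).trans ?_
      linarith [h n (by omega), h M (by omega)]
    have h1 := abel_ineq b (fun n => 1 / Real.log n) M (2*K) hbs
      (fun n _ => one_div_nonneg.2 (Real.log_natCast_nonneg n))
      (fun n hn => by
        have hn3 : (3:ℝ) ≤ n := by exact_mod_cast (hM.trans hn.le)
        exact one_div_le_one_div_of_le (by linarith [one_le_log hn3]) (Real.log_le_log (by linarith) (by simp))) N hMN
    have h2 := loglog_tele M N hM hMN
    have hlN : 0 ≤ 1 / Real.log N := one_div_nonneg.2 (Real.log_natCast_nonneg N)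
    have e : F N - F M = ∑ i ∈ Ioc M N, ((1 / Real.log i : ℝ) : ℂ) * b i
        + a * ((∑ n ∈ Ioc M N, (Real.log n - Real.log ((n - 1 : ℕ) : ℝ)) / Real.log n
      - (Real.log (Real.log N) - Real.log (Real.log M)) : ℝ) : ℂ) := by
      rw [hF]
      simp only
      rw [← sum_Ioc_consecutive _ (Nat.zero_le M) hMN]
      rw [Complex.ofReal_sub, Complex.ofReal_sub, Complex.ofReal_sum]
      simp only [Complex.ofReal_div, Complex.ofReal_sub, Complex.ofReal_one]
      rw [mul_sub, mul_sum, ← add_sub_assoc, ← sum_add_distrib]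
      have : ∑ i ∈ Ioc M N, (if i.Prime then g i / (i:ℂ) else 0) = ∑ i ∈ Ioc M N, (1 / (Real.log i : ℂ) * b i + a * ((Real.log i - Real.log ((i-1:ℕ):ℝ)) / Real.log i)) := by
        refine sum_congr rfl (fun i hi => ?_)
        have hi3 : (3:ℝ) ≤ i := by exact_mod_cast (hM.trans (mem_Ioc.1 hi).1.le)
        have hl : (Real.log i : ℂ) ≠ 0 := by
          exact_mod_cast (by linarith [one_le_log hi3] : Real.log i ≠ 0)
        simp only [hb]
        split_ifs
        · field_simp; ring
        · field_simp; ring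
      rw [this]
      ring
    rw [e]
    refine (norm_add_le _ _).trans ?_
    rw [norm_mul, Complex.norm_real, Real.norm_eq_abs]
    have h3 : 1 / Real.log ((M+1:ℕ):ℝ) ≤ 1 / Real.log M :=
      one_div_le_one_div_of_le (by linarith) (Real.log_le_log (by linarith) (by simp))
    have h4 : 2 * K * (1 / Real.log ((M+1:ℕ):ℝ)) ≤ 2 * K * (1 / Real.log M) := by gcongr
    have h5 := mul_le_mul_of_nonneg_left (h2.trans (sub_le_self _ hlN)) (norm_nonneg a)
    have : C / Real.log M = 2 * K * (1 / Real.log M) + ‖a‖ * (1 / Real.log M) := by simp only [C]; ring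
    rw [this]
    linarith
  have hlim : Tendsto (fun n : ℕ => C / Real.log n) atTop (𝓝 0) :=
    Tendsto.div_atTop tendsto_const_nhds (Real.tendsto_log_atTop.comp tendsto_natCast_atTop_atTop)
  have hcau : CauchySeq F := by
    rw [Metric.cauchySeq_iff']
    intro ε hε
    obtain ⟨n, hn1, hn2⟩ := ((hlim.eventually_lt_const hε).and (eventually_ge_atTop 3)).exists
    refine ⟨n, fun m hm => ?_⟩
    rw [dist_eq_norm]
    exact (key n m hn2 hm).trans_lt hn1
  obtain ⟨B, hB⟩ := cauchySeq_tendsto_of_complete hcau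
  have hB' : ∀ M : ℕ, 3 ≤ M → ‖F M - B‖ ≤ C / Real.log M := by
    intro M hM
    rw [norm_sub_rev]
    refine le_of_tendsto (hB.sub_const (F M)).norm ?_
    filter_upwards [eventually_ge_atTop M] with N hN using key M N hM hN
  refine ⟨B, (C + ‖a‖) * 2, fun x hx => ?_⟩
  set N := ⌊x⌋₊ with hN
  have hN3 : 3 ≤ N := Nat.le_floor (by exact_mod_cast hx)
  have hN3' : (3:ℝ) ≤ N := by exact_mod_cast hN3
  have hNx : (N:ℝ) ≤ x := Nat.floor_le (by linarith)
  have hxN : x ≤ N + 1 := (Nat.lt_floor_add_one x).le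
  have hlN := one_le_log hN3'
  have hlx := one_le_log hx
  have hll : |Real.log (Real.log N) - Real.log (Real.log x)| ≤ 1 / Real.log N := by
    have hle : Real.log N ≤ Real.log x := Real.log_le_log (by linarith) hNx
    have h1 := log_succ_sub (by linarith) hNx hxN
    have h2 : Real.log (Real.log N) ≤ Real.log (Real.log x) := Real.log_le_log (by linarith) hle
    have h3 : Real.log (Real.log x) - Real.log (Real.log N) ≤ Real.log x / Real.log N - 1 := by
      rw [← Real.log_div (by linarith) (by linarith)]
      exact Real.log_le_sub_one_of_pos (div_pos (by linarith) (by linarith))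
    have h4 : Real.log x / Real.log N - 1 ≤ 1 / Real.log N := by
      rw [div_sub_one (by linarith)]
      gcongr
    rw [abs_le]; constructor <;> linarith
  have hl2 : 1 / Real.log N ≤ 2 / Real.log x := by
    rw [div_le_div_iff₀ (by linarith) (by linarith)]
    have : Real.log x ≤ Real.log ((N:ℝ)^2) := Real.log_le_log (by linarith) (by nlinarith)
    rw [Real.log_pow] at this
    push_cast at this
    linarith
  have e : ∑ p ∈ Ioc 0 N, (if p.Prime then g p / (p:ℂ) else 0) - (a * Real.log (Real.log x) + B)
      = (F N - B) + a * ((Real.log (Real.log N) - Real.log (Real.log x) : ℝ) : ℂ) := by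
    simp only [hF]; push_cast; ring
  rw [e]
  refine (norm_add_le _ _).trans ?_
  rw [norm_mul, Complex.norm_real, Real.norm_eq_abs]
  calc _ ≤ C / Real.log N + ‖a‖ * (1 / Real.log N) := by
        gcongr
        exact hB' N hN3
    _ = (C + ‖a‖) * (1 / Real.log N) := by ring
    _ ≤ (C + ‖a‖) * (2 / Real.log x) := by gcongr
    _ = _ := by ring

lemma HasM.one : HasM (fun _ => 1) 1 := by
  obtain ⟨K, hK⟩ := mertens_one
  obtain ⟨K', hK'⟩ := prime_powers
  refine HasM.of_log _ _ (K' + K) (fun N hN => ?_)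
  have h1 := hK' (fun _ => 1) (by simp) N
  have h2 := hK N hN
  rw [← Real.norm_eq_abs, ← Complex.norm_real] at h2
  refine le_trans (le_of_eq ?_) (norm_add_le_of_le h1 h2)
  push_cast
  simp

lemma HasM.char {d : ℕ} [NeZero d] (χ : DirichletCharacter ℂ d) (hχ : χ ≠ 1) :
    HasM (fun n => χ (n : ZMod d)) 0 := by
  obtain ⟨K, hK⟩ := char_mangoldt_bdd χ hχ
  obtain ⟨K', hK'⟩ := prime_powers
  refine HasM.of_log _ _ (K' + K) (fun N hN => ?_)
  have h1 := hK' (fun n => χ (n : ZMod d)) (fun _ => χ.norm_le_one _) N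
  refine le_trans (le_of_eq ?_) (norm_add_le_of_le h1 (hK N))
  simp

lemma HasM.char_one {d : ℕ} [NeZero d] : HasM (fun n => (1 : DirichletCharacter ℂ d) (n : ZMod d)) 1 := by
  refine HasM.one.congr d (fun p hp hd => ?_)
  refine MulChar.one_apply ?_
  rw [ZMod.isUnit_iff_coprime]
  exact (Nat.Prime.coprime_iff_not_dvd hp).2 (Nat.not_dvd_of_pos_of_lt (NeZero.pos d) hd)

open Classical in
lemma HasM.residue (d : ℕ) (hd : d ≠ 0) : HasM (fun n => if (n : ZMod d) = 1 then (d.totient : ℂ) else 0) 1 := by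
  have : NeZero d := ⟨hd⟩
  have := HasM.sum (Finset.univ : Finset (DirichletCharacter ℂ d)) (fun χ n => χ (n : ZMod d))
    (fun χ => if χ = 1 then 1 else 0) (fun χ _ => by
      split_ifs with h
      · subst h; exact HasM.char_one
      · exact HasM.char χ h)
  simp only [DirichletCharacter.sum_characters_eq] at this
  simpa using this

theorem stmt_16 (k : ℕ) (hk : 1 ≤ k) :
    ∃ B C : ℝ, 0 < C ∧ ∀ x : ℝ, 3 ≤ x →
      |(∑ p ∈ (Finset.Icc 1 ⌊x⌋₊).filter (fun p => p.Prime ∧ Nat.Coprime p k),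
          (Nat.gcd (p - 1) k : ℝ) / (p : ℝ)) -
        ((k.divisors.card : ℝ) * Real.log (Real.log x) + B)| ≤ C / Real.log x := by
  classical
  have h1 := HasM.sum k.divisors (fun d n => if (n : ZMod d) = 1 then (d.totient : ℂ) else 0) (fun _ => 1)
    (fun d hd => HasM.residue d (Nat.pos_of_mem_divisors hd).ne')
  have h2 : HasM (fun p => if Nat.Coprime p k then (Nat.gcd (p-1) k : ℂ) else 0) (∑ d ∈ k.divisors, 1) := by
    refine h1.congr k (fun p hp hkp => ?_)
    rw [if_pos ((Nat.Prime.coprime_iff_not_dvd hp).2 (Nat.not_dvd_of_pos_of_lt (by omega) hkp))]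
    have h3 : ((Nat.gcd (p-1) k : ℕ) : ℂ) = ∑ d ∈ (Nat.gcd (p-1) k).divisors, (d.totient : ℂ) := by
      exact_mod_cast (Nat.sum_totient _).symm
    rw [h3, ← Finset.sum_filter]
    refine Finset.sum_congr ?_ (fun _ _ => rfl)
    ext d
    have : ((p : ℕ) : ZMod d) = 1 ↔ d ∣ p - 1 := by
      rw [← Nat.cast_one, eq_comm, ZMod.natCast_eq_natCast_iff, Nat.modEq_iff_dvd' hp.one_le]
    simp only [Nat.mem_divisors, Finset.mem_filter, this, Nat.dvd_gcd_iff]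
    have : Nat.gcd (p-1) k ≠ 0 := Nat.gcd_ne_zero_right (by omega)
    constructor
    · rintro ⟨⟨a, b⟩, _⟩; exact ⟨⟨b, by omega⟩, a⟩
    · rintro ⟨⟨a, b⟩, c⟩; exact ⟨⟨c, a⟩, this⟩
  obtain ⟨B, C, H⟩ := h2
  refine ⟨B.re, |C| + 1, by positivity, fun x hx => ?_⟩
  have hl := one_le_log hx
  refine le_trans ?_ ((H x hx).trans (by gcongr; linarith [le_abs_self C]))
  refine le_trans (le_of_eq ?_) (Complex.abs_re_le_norm _)
  congr 1
  rw [Complex.sub_re, Complex.add_re, Complex.re_sum, Finset.sum_filter]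
  congr 1
  · refine Finset.sum_congr (by ext; simp; omega) (fun p _ => ?_)
    beta_reduce
    by_cases hp : p.Prime
    · by_cases hc : Nat.Coprime p k
      · rw [if_pos ⟨hp, hc⟩, if_pos hp, if_pos hc, ← Complex.ofReal_natCast, ← Complex.ofReal_natCast, ← Complex.ofReal_div, Complex.ofReal_re]
      · rw [if_neg (fun h => hc h.2), if_pos hp, if_neg hc]; simp
    · rw [if_neg (fun h => hp h.1), if_neg hp]; simp
  · simp [← Complex.ofReal_natCast]
end
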